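/- Let μ be the standard Gaussian measure on ℝⁿ, let Ω = {x ∈ ℝⁿ : g_j(x) ≥ 0, j = 1,…,m}, and assume both Ω and ℝⁿ ∖ Ω have nonempty interior. Let f ∈ ℝ[x] be a polynomial that is strictly positive almost everywhere on Ω. Then ō_d(f) → ∫_Ω f dμ as d → ∞; moreover, if for each d ≥ d₀ the pair (u^d, v^d) is an optimal solution of the semidefinite program defining ō_d(f), then u^d_0 → μ(Ω) as d → ∞. In particular, for f = 1 the sequence (ō_d(1)) is monotone non-increasing and converges to μ(Ω). -/

import Mathlib

open MeasureTheory MvPolynomial Filter Topology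

noncomputable def gaussianMeasure (n : ℕ) : Measure (Fin n → ℝ) :=
  volume.withDensity fun x =>
    ENNReal.ofReal ((2 * Real.pi) ^ (-(n : ℝ) / 2) * Real.exp (-(∑ i, x i ^ 2) / 2))

noncomputable def expMeasure (n : ℕ) : Measure (Fin n → ℝ) :=
  (volume.restrict {x : Fin n → ℝ | ∀ i, 0 ≤ x i}).withDensity fun x =>
    ENNReal.ofReal (Real.exp (-(∑ i, x i)))

/-- degree |α| of a multi-index -/
def fdeg {n : ℕ} (α : Fin n →₀ ℕ) : ℕ := α.sum fun _ e => e

/-- Riesz functional `L_u(p)` of a (pseudo-)moment sequence `u`. -/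
noncomputable def riesz {n : ℕ} (u : (Fin n →₀ ℕ) → ℝ) (p : MvPolynomial (Fin n) ℝ) : ℝ :=
  ∑ α ∈ p.support, p.coeff α * u α

/-- Positive semidefiniteness of the moment matrix `M_d(u)`, expressed via its
quadratic form: `L_u(p²) ≥ 0` for all polynomials of degree at most `d`. -/
def MomPSD {n : ℕ} (d : ℕ) (u : (Fin n →₀ ℕ) → ℝ) : Prop :=
  ∀ p : MvPolynomial (Fin n) ℝ, p.totalDegree ≤ d → 0 ≤ riesz u (p ^ 2)

/-- Positive semidefiniteness of the localizing matrix `M_k(g u)`, expressed via its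
quadratic form: `L_u(g·p²) ≥ 0` for all polynomials of degree at most `k`. -/
def LocPSD {n : ℕ} (k : ℕ) (g : MvPolynomial (Fin n) ℝ) (u : (Fin n →₀ ℕ) → ℝ) : Prop :=
  ∀ p : MvPolynomial (Fin n) ℝ, p.totalDegree ≤ k → 0 ≤ riesz u (g * p ^ 2)

/-- moments of the standard Gaussian measure -/
noncomputable def gmom (n : ℕ) (α : Fin n →₀ ℕ) : ℝ :=
  ∫ x, (∏ i, x i ^ α i) ∂gaussianMeasure n

/-- `d_j = ⌈deg g / 2⌉` -/
def dHalf {n : ℕ} (g : MvPolynomial (Fin n) ℝ) : ℕ := (g.totalDegree + 1) / 2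

/-- the basic closed semi-algebraic set determined by the polynomials `g_j` -/
def semialg {n m : ℕ} (g : Fin m → MvPolynomial (Fin n) ℝ) : Set (Fin n → ℝ) :=
  {x | ∀ j, 0 ≤ eval x (g j)}

/-- feasibility for the primal semidefinite relaxation of order `d` (Gaussian measure) -/
def Feasible {n m : ℕ} (g : Fin m → MvPolynomial (Fin n) ℝ) (d : ℕ)
    (u v : (Fin n →₀ ℕ) → ℝ) : Prop :=
  (∀ α : Fin n →₀ ℕ, fdeg α ≤ 2 * d → u α + v α = gmom n α) ∧
  MomPSD d u ∧ MomPSD d v ∧ ∀ j, LocPSD (d - dHalf (g j)) (g j) u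

/-- the value `ō_d(f)` of the primal semidefinite relaxation of order `d` -/
noncomputable def obar {n m : ℕ} (g : Fin m → MvPolynomial (Fin n) ℝ) (d : ℕ)
    (f : MvPolynomial (Fin n) ℝ) : ℝ :=
  sSup {r | ∃ u v, Feasible g d u v ∧ r = riesz u f}

/-- the Stokes polynomial `p_{i,α} = ∂(x^α f)/∂x_i − x_i · x^α f` (Gaussian case) -/
noncomputable def pStokesG {n : ℕ} (f : MvPolynomial (Fin n) ℝ) (i : Fin n) (α : Fin n →₀ ℕ) :
    MvPolynomial (Fin n) ℝ :=
  pderiv i (monomial α 1 * f) - X i * (monomial α 1 * f)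

/-- the Stokes polynomial `p_{i,α} = ∂(x^α f)/∂x_i − x^α f` (exponential case) -/
noncomputable def pStokesE {n : ℕ} (f : MvPolynomial (Fin n) ℝ) (i : Fin n) (α : Fin n →₀ ℕ) :
    MvPolynomial (Fin n) ℝ :=
  pderiv i (monomial α 1 * f) - monomial α 1 * f

/-- feasibility for the Stokes-augmented semidefinite relaxation of order `d` -/
def FeasibleS {n m : ℕ} (g : Fin m → MvPolynomial (Fin n) ℝ) (f : MvPolynomial (Fin n) ℝ)
    (d : ℕ) (u v : (Fin n →₀ ℕ) → ℝ) : Prop :=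
  Feasible g d u v ∧
  ∀ (i : Fin n) (α : Fin n →₀ ℕ), (pStokesG f i α).totalDegree ≤ 2 * d →
    riesz u (pStokesG f i α) = 0

/-- the value `ω̄_d` of the Stokes-augmented semidefinite relaxation of order `d` -/
noncomputable def omegabar {n m : ℕ} (g : Fin m → MvPolynomial (Fin n) ℝ)
    (f : MvPolynomial (Fin n) ℝ) (d : ℕ) : ℝ :=
  sSup {r | ∃ u v, FeasibleS g f d u v ∧ r = u 0}

/-- `p ∈ Σ[x]_d`: `p` is a sum of squares of polynomials of degree at most `d` -/
def IsSOS {n : ℕ} (d : ℕ) (p : MvPolynomial (Fin n) ℝ) : Prop :=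
  ∃ (k : ℕ) (q : Fin k → MvPolynomial (Fin n) ℝ),
    (∀ i, (q i).totalDegree ≤ d) ∧ p = ∑ i, q i ^ 2

/-- membership in the truncated quadratic module `Q_{2d}(Ω)` -/
def InQM {n m : ℕ} (g : Fin m → MvPolynomial (Fin n) ℝ) (d : ℕ)
    (p : MvPolynomial (Fin n) ℝ) : Prop :=
  ∃ (σ₀ : MvPolynomial (Fin n) ℝ) (σ : Fin m → MvPolynomial (Fin n) ℝ),
    IsSOS d σ₀ ∧ (∀ j, IsSOS (d - dHalf (g j)) (σ j)) ∧ p = σ₀ + ∑ j, σ j * g j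


lemma poly_bound {n : ℕ} (p : MvPolynomial (Fin n) ℝ) :
    ∃ C c : ℝ, 0 ≤ C ∧ 0 ≤ c ∧ ∀ x : Fin n → ℝ, |eval x p| ≤ C * Real.exp (c * ‖x‖) := by
  induction p using MvPolynomial.induction_on with
  | C a => exact ⟨|a|, 0, abs_nonneg _, le_rfl, fun x => by simp⟩
  | add p q hp hq =>
    obtain ⟨C, c, hC, hc, h⟩ := hp
    obtain ⟨D, e, hD, he, h'⟩ := hq
    refine ⟨C + D, c + e, by positivity, by positivity, fun x => ?_⟩
    have hx := norm_nonneg x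
    have h1 : Real.exp (c * ‖x‖) ≤ Real.exp ((c + e) * ‖x‖) := by
      apply Real.exp_le_exp.2; nlinarith
    have h2 : Real.exp (e * ‖x‖) ≤ Real.exp ((c + e) * ‖x‖) := by
      apply Real.exp_le_exp.2; nlinarith
    rw [map_add]
    calc |eval x p + eval x q| ≤ |eval x p| + |eval x q| := abs_add_le _ _
      _ ≤ C * Real.exp (c * ‖x‖) + D * Real.exp (e * ‖x‖) := add_le_add (h x) (h' x)
      _ ≤ C * Real.exp ((c + e) * ‖x‖) + D * Real.exp ((c + e) * ‖x‖) := by gcongr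
      _ = _ := by ring
  | mul_X p i hp =>
    obtain ⟨C, c, hC, hc, h⟩ := hp
    refine ⟨C, c + 1, hC, by positivity, fun x => ?_⟩
    rw [map_mul, eval_X, abs_mul]
    have h1 : |x i| ≤ Real.exp ‖x‖ := by
      have := norm_le_pi_norm x i
      rw [Real.norm_eq_abs] at this
      linarith [Real.add_one_le_exp ‖x‖]
    calc |eval x p| * |x i| ≤ (C * Real.exp (c * ‖x‖)) * Real.exp ‖x‖ := by
          gcongr; exact h x
      _ = _ := by rw [mul_assoc, ← Real.exp_add]; ring_nf

lemma cont_eval {n : ℕ} (p : MvPolynomial (Fin n) ℝ) :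
    Continuous (fun x : Fin n → ℝ => eval x p) := MvPolynomial.continuous_eval p

/-- exponential integrability of a weight -/
def ExpInt {n : ℕ} (ρ : Measure (Fin n → ℝ)) (w : (Fin n → ℝ) → ℝ) : Prop :=
  AEStronglyMeasurable w ρ ∧ ∀ c : ℝ, Integrable (fun x => |w x| * Real.exp (c * ‖x‖)) ρ

lemma ExpInt.mul_poly {n : ℕ} {ρ : Measure (Fin n → ℝ)} {w : (Fin n → ℝ) → ℝ}
    (hw : ExpInt ρ w) (p : MvPolynomial (Fin n) ℝ) : ExpInt ρ (fun x => w x * eval x p) := by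
  obtain ⟨C, c, hC, hc, h⟩ := poly_bound p
  have hm : AEStronglyMeasurable (fun x => w x * eval x p) ρ :=
    hw.1.mul (cont_eval p).aestronglyMeasurable
  refine ⟨hm, fun c' => ?_⟩
  refine ((hw.2 (c + c')).const_mul C).mono' ?_ ?_
  · exact hm.norm.mul (by fun_prop : Continuous fun x : Fin n → ℝ => Real.exp (c' * ‖x‖)).aestronglyMeasurable
  · refine Eventually.of_forall fun x => ?_
    rw [Real.norm_eq_abs, abs_mul, abs_abs, abs_mul, Real.abs_exp]
    calc |w x| * |eval x p| * Real.exp (c' * ‖x‖)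
        ≤ |w x| * (C * Real.exp (c * ‖x‖)) * Real.exp (c' * ‖x‖) := by gcongr; exact h x
      _ = _ := by rw [add_mul, Real.exp_add]; ring

lemma ExpInt.integrable {n : ℕ} {ρ : Measure (Fin n → ℝ)} {w : (Fin n → ℝ) → ℝ}
    (hw : ExpInt ρ w) : Integrable w ρ := by
  have := hw.2 0
  simp only [zero_mul, Real.exp_zero, mul_one] at this
  exact (integrable_norm_iff hw.1).1 this

lemma ExpInt.of_le {n : ℕ} {ρ : Measure (Fin n → ℝ)} {w w' : (Fin n → ℝ) → ℝ}
    (hw : ExpInt ρ w) (hm : AEStronglyMeasurable w' ρ) (h : ∀ᵐ x ∂ρ, |w' x| ≤ |w x|) :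
    ExpInt ρ w' := by
  refine ⟨hm, fun c => (hw.2 c).mono' ?_ ?_⟩
  · exact hm.norm.mul (by fun_prop : Continuous fun x : Fin n → ℝ => Real.exp (c * ‖x‖)).aestronglyMeasurable
  · filter_upwards [h] with x hx
    rw [Real.norm_eq_abs, abs_mul, abs_abs, Real.abs_exp]
    gcongr

lemma dual_poly {n : ℕ} (L : StrongDual ℝ (Fin n → ℝ)) :
    ∃ p : MvPolynomial (Fin n) ℝ, ∀ x, eval x p = L x := by
  refine ⟨∑ i, C (L (Pi.single i 1)) * X i, fun x => ?_⟩
  simp only [map_sum, map_mul, eval_C, eval_X]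
  conv_rhs => rw [show x = ∑ i, x i • (Pi.single i (1:ℝ) : Fin n → ℝ) from by
    ext j; simp [Finset.sum_apply, Pi.single_apply]]
  rw [map_sum]
  exact Finset.sum_congr rfl fun i _ => by rw [map_smul, smul_eq_mul, mul_comm]

lemma fourier_w_zero {n : ℕ} {ρ : Measure (Fin n → ℝ)} {w : (Fin n → ℝ) → ℝ}
    (hw : ExpInt ρ w) (h0 : ∀ p : MvPolynomial (Fin n) ℝ, ∫ x, w x * eval x p ∂ρ = 0)
    (L : StrongDual ℝ (Fin n → ℝ)) :
    ∫ x, (w x : ℂ) * Complex.exp (L x * Complex.I) ∂ρ = 0 := by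
  obtain ⟨p, hp⟩ := dual_poly L
  let F : ℕ → (Fin n → ℝ) → ℂ := fun k x =>
    ((w x * eval x (p ^ k) : ℝ) : ℂ) * (Complex.I ^ k / (k.factorial : ℂ))
  have hF : ∀ k, ∫ x, F k x ∂ρ = 0 := by
    intro k
    simp only [F]
    rw [integral_mul_const, integral_complex_ofReal, h0]
    simp
  have hs := hasSum_integral_of_dominated_convergence (μ := ρ) (F := F)
    (f := fun x => (w x : ℂ) * Complex.exp (L x * Complex.I))
    (fun k x => |w x| * (|L x| ^ k / k.factorial)) ?_ ?_ ?_ ?_ ?_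
  · simp only [hF] at hs
    exact hs.unique hasSum_zero
  · intro k
    exact (Complex.continuous_ofReal.comp_aestronglyMeasurable
      (hw.1.mul (cont_eval _).aestronglyMeasurable)).mul_const _
  · intro k
    refine Eventually.of_forall fun x => ?_
    simp only [F, norm_mul, norm_div, norm_pow, Complex.norm_I, Complex.norm_real,
      Real.norm_eq_abs, map_pow, hp, Complex.norm_natCast, one_pow]
    exact le_of_eq (by ring)
  · refine Eventually.of_forall fun x => ?_
    exact (Real.summable_pow_div_factorial _).mul_left _
  · have : ∀ x, ∑' k : ℕ, |w x| * (|L x| ^ k / k.factorial) = |w x| * Real.exp |L x| := by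
      intro x
      rw [tsum_mul_left, Real.exp_eq_exp_ℝ, NormedSpace.exp_eq_tsum_div]
    simp only [this]
    refine (hw.2 ‖L‖).mono' ?_ ?_
    · exact hw.1.norm.mul (by fun_prop : Continuous fun x : Fin n → ℝ => Real.exp |L x|).aestronglyMeasurable
    · refine Eventually.of_forall fun x => ?_
      rw [Real.norm_eq_abs, abs_mul, abs_abs, Real.abs_exp]
      gcongr
      exact L.le_opNorm x
  · refine Eventually.of_forall fun x => ?_
    have h1 : HasSum (fun k : ℕ => ((L x : ℂ) * Complex.I) ^ k / (k.factorial : ℂ))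
        (Complex.exp (L x * Complex.I)) := by
      rw [Complex.exp_eq_exp_ℂ]
      exact NormedSpace.expSeries_div_hasSum_exp _
    have h2 := h1.mul_left (w x : ℂ)
    have h3 : (fun k => F k x) =
        fun k : ℕ => (w x : ℂ) * (((L x : ℂ) * Complex.I) ^ k / (k.factorial : ℂ)) := by
      funext k
      simp only [F, map_pow, hp]
      push_cast
      ring
    rw [h3]
    exact h2

lemma ae_zero_of_moments {n : ℕ} {ρ : Measure (Fin n → ℝ)} [SigmaFinite ρ] {w : (Fin n → ℝ) → ℝ}
    (hw : ExpInt ρ w) (h0 : ∀ p : MvPolynomial (Fin n) ℝ, ∫ x, w x * eval x p ∂ρ = 0) :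
    w =ᵐ[ρ] 0 := by
  have hi := hw.integrable
  have hm : AEMeasurable w ρ := hw.1.aemeasurable
  let a : (Fin n → ℝ) → ENNReal := fun x => ENNReal.ofReal (w x)
  let b : (Fin n → ℝ) → ENNReal := fun x => ENNReal.ofReal (-w x)
  have ha : AEMeasurable a ρ := hm.ennreal_ofReal
  have hb : AEMeasurable b ρ := hm.neg.ennreal_ofReal
  have hafin : ∫⁻ x, a x ∂ρ ≠ ⊤ := hi.lintegral_lt_top.ne
  have hbfin : ∫⁻ x, b x ∂ρ ≠ ⊤ := hi.neg.lintegral_lt_top.ne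
  have : IsFiniteMeasure (ρ.withDensity a) := isFiniteMeasure_withDensity hafin
  have : IsFiniteMeasure (ρ.withDensity b) := isFiniteMeasure_withDensity hbfin
  have heq : ρ.withDensity a = ρ.withDensity b := by
    apply Measure.ext_of_charFunDual
    funext L
    rw [charFunDual_apply, charFunDual_apply,
      integral_withDensity_eq_integral_toReal_smul₀ ha (by simp [a]),
      integral_withDensity_eq_integral_toReal_smul₀ hb (by simp [b]), ← sub_eq_zero,
      ← integral_sub, ← fourier_w_zero hw h0 L]
    · refine integral_congr_ae (Eventually.of_forall fun x => ?_)
      simp only [a, b, ENNReal.toReal_ofReal', Complex.real_smul]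
      rw [← sub_mul]
      congr 1
      rw [← Complex.ofReal_sub, max_comm, max_comm (-w x)]
      congr 1
      rcases le_total 0 (w x) with h | h
      · rw [max_eq_right h, max_eq_left (by linarith)]; ring
      · rw [max_eq_left h, max_eq_right (by linarith)]; ring
    all_goals
      refine hi.norm.mono' ?_ (Eventually.of_forall fun x => ?_)
      · simp only [Complex.real_smul]
        refine AEStronglyMeasurable.mul (Complex.continuous_ofReal.comp_aestronglyMeasurable ?_)
          (by fun_prop : Continuous fun x => Complex.exp (L x * Complex.I)).aestronglyMeasurable
        first
          | exact ha.ennreal_toReal.aestronglyMeasurable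
          | exact hb.ennreal_toReal.aestronglyMeasurable
      · rw [norm_smul, Complex.norm_exp_ofReal_mul_I, mul_one]
        simp only [a, b, ENNReal.toReal_ofReal', Real.norm_eq_abs]
        rw [abs_of_nonneg (le_max_right _ _)]
        first
          | exact max_le (le_abs_self _) (abs_nonneg _)
          | exact max_le (neg_le_abs _) (abs_nonneg _)
  have h2 : a =ᵐ[ρ] b := (withDensity_eq_iff ha hb hafin).1 heq
  filter_upwards [h2] with x hx
  simp only [a, b] at hx
  rcases le_total 0 (w x) with h | h
  · rw [ENNReal.ofReal_of_nonpos (by linarith : -w x ≤ 0), ENNReal.ofReal_eq_zero] at hx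
    exact le_antisymm hx h
  · rw [ENNReal.ofReal_of_nonpos h, eq_comm, ENNReal.ofReal_eq_zero] at hx
    exact le_antisymm h (by simpa using hx)

lemma ExpInt.of_memLp {n : ℕ} {ρ : Measure (Fin n → ℝ)} (h1 : ExpInt ρ (fun _ => 1))
    {w : (Fin n → ℝ) → ℝ} (hw : MemLp w 2 ρ) : ExpInt ρ w := by
  refine ⟨hw.1, fun c => ?_⟩
  have he : MemLp (fun x : Fin n → ℝ => Real.exp (c * ‖x‖)) 2 ρ := by
    rw [memLp_two_iff_integrable_sq (by fun_prop : Continuous fun x : Fin n → ℝ => Real.exp (c * ‖x‖)).aestronglyMeasurable]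
    have := h1.2 (2 * c)
    refine this.congr (Eventually.of_forall fun x => ?_)
    simp only [abs_one, one_mul]
    rw [← Real.exp_nat_mul]
    congr 1
    push_cast
    ring
  exact hw.norm.integrable_mul he

lemma memLp_poly {n : ℕ} {ρ : Measure (Fin n → ℝ)} (h1 : ExpInt ρ (fun _ => 1))
    (p : MvPolynomial (Fin n) ℝ) : MemLp (fun x => eval x p) 2 ρ := by
  rw [memLp_two_iff_integrable_sq (cont_eval p).aestronglyMeasurable]
  have := (h1.mul_poly (p ^ 2)).integrable
  simpa using this

noncomputable def polyL2 {n : ℕ} {ρ : Measure (Fin n → ℝ)} (h1 : ExpInt ρ (fun _ => 1)) :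
    MvPolynomial (Fin n) ℝ →ₗ[ℝ] Lp ℝ 2 ρ where
  toFun p := (memLp_poly h1 p).toLp _
  map_add' p q := by
    rw [← MemLp.toLp_add]
    congr 1
    funext x
    simp
  map_smul' c p := by
    rw [RingHom.id_apply, ← MemLp.toLp_const_smul]
    congr 1
    funext x
    simp

lemma polyL2_dense {n : ℕ} {ρ : Measure (Fin n → ℝ)} [SigmaFinite ρ] (h1 : ExpInt ρ (fun _ => 1)) :
    DenseRange (polyL2 h1) := by
  have : (LinearMap.range (polyL2 h1)).topologicalClosure = ⊤ := by
    rw [Submodule.topologicalClosure_eq_top_iff, Submodule.eq_bot_iff]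
    intro w hw
    have hz : w =ᵐ[ρ] (0 : (Fin n → ℝ) → ℝ) := by
      apply ae_zero_of_moments (ExpInt.of_memLp h1 (Lp.memLp w))
      intro p
      have := (Submodule.mem_orthogonal' _ _).1 hw (polyL2 h1 p) ⟨p, rfl⟩
      rw [L2.inner_def] at this
      rw [← this]
      apply integral_congr_ae
      filter_upwards [(memLp_poly h1 p).coeFn_toLp] with x hx
      simp only [polyL2, LinearMap.coe_mk, AddHom.coe_mk]
      rw [hx]
      simp [mul_comm]
    exact (Lp.eq_zero_iff_ae_eq_zero).2 hz
  have h2 := Submodule.dense_iff_topologicalClosure_eq_top.2 this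
  simpa [DenseRange] using! h2

lemma lp_norm_sq {n : ℕ} {ρ : Measure (Fin n → ℝ)} {φ : (Fin n → ℝ) → ℝ} (hφ : MemLp φ 2 ρ) :
    ‖hφ.toLp φ‖ ^ 2 = ∫ x, φ x ^ 2 ∂ρ := by
  rw [← real_inner_self_eq_norm_sq, L2.inner_def]
  apply integral_congr_ae
  filter_upwards [hφ.coeFn_toLp] with x hx
  rw [hx]
  simp [sq]

lemma poly_approx {n : ℕ} {ρ : Measure (Fin n → ℝ)} [SigmaFinite ρ] (h1 : ExpInt ρ (fun _ => 1))
    {φ : (Fin n → ℝ) → ℝ} (hφ : MemLp φ 2 ρ) {ε : ℝ} (hε : 0 < ε) :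
    ∃ p : MvPolynomial (Fin n) ℝ, ∫ x, (eval x p - φ x) ^ 2 ∂ρ < ε := by
  obtain ⟨p, hp⟩ := (polyL2_dense h1).exists_dist_lt (hφ.toLp φ) (Real.sqrt_pos.2 hε)
  refine ⟨p, ?_⟩
  have h4 := lp_norm_sq ((memLp_poly h1 p).sub hφ)
  simp only [Pi.sub_apply] at h4
  rw [← h4, MemLp.toLp_sub (memLp_poly h1 p) hφ]
  rw [dist_comm, dist_eq_norm] at hp
  have h3 := pow_lt_pow_left₀ hp (norm_nonneg _) two_ne_zero
  rwa [Real.sq_sqrt hε.le] at h3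

lemma nonneg_of_sq {n : ℕ} {μ : Measure (Fin n → ℝ)} {h : (Fin n → ℝ) → ℝ} [SigmaFinite μ]
    (hh : ExpInt μ h) (h0 : ∀ p : MvPolynomial (Fin n) ℝ, 0 ≤ ∫ x, h x * eval x p ^ 2 ∂μ) :
    ∀ᵐ x ∂μ, 0 ≤ h x := by
  let a : (Fin n → ℝ) → ENNReal := fun x => ENNReal.ofReal |h x|
  have ha : AEMeasurable a μ := hh.1.norm.aemeasurable.ennreal_ofReal
  let ρ := μ.withDensity a
  have hint : ∀ F : (Fin n → ℝ) → ℝ, ∫ x, F x ∂ρ = ∫ x, |h x| * F x ∂μ := by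
    intro F
    simp only [ρ]
    rw [integral_withDensity_eq_integral_toReal_smul₀ ha (by simp [a])]
    simp [a]
  have hintb : ∀ F : (Fin n → ℝ) → ℝ, Integrable F ρ ↔ Integrable (fun x => |h x| * F x) μ := by
    intro F
    simp only [ρ]
    rw [integrable_withDensity_iff_integrable_smul₀' ha (by simp [a])]
    simp [a]
  have hfin : IsFiniteMeasure ρ := isFiniteMeasure_withDensity (by
    have := hh.integrable.abs.lintegral_lt_top.ne
    exact this)
  have h1 : ExpInt ρ (fun _ => 1) := by
    refine ⟨aestronglyMeasurable_const, fun c => ?_⟩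
    rw [hintb]
    simpa using hh.2 c
  let N : Set (Fin n → ℝ) := {x | hh.1.mk h x < 0}
  have hN : MeasurableSet N := hh.1.stronglyMeasurable_mk.measurable measurableSet_Iio
  let φ : (Fin n → ℝ) → ℝ := N.indicator 1
  have hφm : Measurable φ := measurable_one.indicator hN
  have hφ : MemLp φ 2 ρ := (memLp_const (1:ℝ)).indicator hN
  have hφi : Integrable (fun x => |h x| * φ x) μ := (hintb _).1 (hφ.integrable one_le_two)
  have key : ∀ p : MvPolynomial (Fin n) ℝ,
      (∫ x, |h x| * φ x ∂μ) ≤ 2 * ∫ x, (eval x p - φ x) ^ 2 ∂ρ := by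
    intro p
    have hd : Integrable (fun x => |h x| * (eval x p - φ x) ^ 2) μ :=
      (hintb _).1 ((memLp_poly h1 p).sub hφ).integrable_sq
    have hp := h0 p
    have hpi : Integrable (fun x => h x * eval x p ^ 2) μ := by
      have h5 := (hh.mul_poly (p ^ 2)).integrable
      simp only [map_pow] at h5
      exact h5
    have : ∫ x, h x * eval x p ^ 2 ∂μ ≤
        ∫ x, (|h x| * (eval x p - φ x) ^ 2 - (1 / 2) * (|h x| * φ x)) ∂μ := by
      refine integral_mono_ae hpi (hd.sub (hφi.const_mul _)) ?_
      filter_upwards [hh.1.ae_eq_mk] with x hx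
      by_cases hxN : x ∈ N
      · have hlt : h x < 0 := by rw [hx]; exact hxN
        have : φ x = 1 := Set.indicator_of_mem hxN _
        simp only [this, abs_of_neg hlt]
        nlinarith [mul_nonneg (neg_nonneg.2 hlt.le) (sq_nonneg (2 * eval x p - 1))]
      · have hge : 0 ≤ h x := by rw [hx]; exact not_lt.1 hxN
        have : φ x = 0 := Set.indicator_of_notMem hxN _
        simp [this, abs_of_nonneg hge]
    rw [integral_sub hd (hφi.const_mul _), integral_const_mul, ← hint] at this
    linarith
  have hz : ∫ x, |h x| * φ x ∂μ ≤ 0 := by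
    refine le_of_forall_pos_le_add fun ε hε => ?_
    obtain ⟨p, hp⟩ := poly_approx h1 hφ (half_pos hε)
    linarith [key p]
  have hnn : ∀ x, 0 ≤ |h x| * φ x := fun x =>
    mul_nonneg (abs_nonneg _) (Set.indicator_nonneg (fun _ _ => zero_le_one) _)
  have hz' := (integral_eq_zero_iff_of_nonneg hnn hφi).1 (le_antisymm hz (integral_nonneg hnn))
  filter_upwards [hz', hh.1.ae_eq_mk] with x hx1 hx2
  by_contra hneg
  have hxN : x ∈ N := by
    change hh.1.mk h x < 0; rw [← hx2]; exact not_le.1 hneg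
  have : φ x = 1 := Set.indicator_of_mem hxN _
  simp only [this, mul_one, Pi.zero_apply, abs_eq_zero] at hx1
  exact hneg hx1.ge

lemma riesz_rep {n : ℕ} {ρ : Measure (Fin n → ℝ)} [SigmaFinite ρ] (h1 : ExpInt ρ (fun _ => 1))
    (L : MvPolynomial (Fin n) ℝ →ₗ[ℝ] ℝ) (C : ℝ) (hC : 0 ≤ C)
    (hL : ∀ p, L p ^ 2 ≤ C ^ 2 * ∫ x, eval x p ^ 2 ∂ρ) :
    ∃ h : (Fin n → ℝ) → ℝ, ExpInt ρ h ∧ ∀ p, L p = ∫ x, h x * eval x p ∂ρ := by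
  have hn : ∀ p, ‖L p‖ ≤ C * ‖polyL2 h1 p‖ := by
    intro p
    rw [Real.norm_eq_abs]
    apply abs_le_of_sq_le_sq _ (by positivity)
    rw [mul_pow]
    refine (hL p).trans (le_of_eq ?_)
    rw [← lp_norm_sq (memLp_poly h1 p)]
    rfl
  let ℓ := L.extendOfNorm (polyL2 h1)
  have hℓ : ∀ p, ℓ (polyL2 h1 p) = L p :=
    fun p => LinearMap.extendOfNorm_eq (polyL2_dense h1) ⟨C, hn⟩ p
  let w : Lp ℝ 2 ρ := (InnerProductSpace.toDual ℝ (Lp ℝ 2 ρ)).symm ℓ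
  refine ⟨w, ExpInt.of_memLp h1 (Lp.memLp w), fun p => ?_⟩
  rw [← hℓ p, ← InnerProductSpace.toDual_symm_apply (𝕜 := ℝ), L2.inner_def]
  apply integral_congr_ae
  filter_upwards [(memLp_poly h1 p).coeFn_toLp] with x hx
  simp only [polyL2, LinearMap.coe_mk, AddHom.coe_mk]
  rw [hx]
  simp [w, mul_comm]

lemma gaussian_expInt (n : ℕ) : ExpInt (gaussianMeasure n) (fun _ => 1) := by
  refine ⟨aestronglyMeasurable_const, fun c => ?_⟩
  unfold gaussianMeasure
  have hcont : Continuous fun x : Fin n → ℝ =>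
    (2 * Real.pi) ^ (-(n : ℝ) / 2) * Real.exp (-(∑ i, x i ^ 2) / 2) := by fun_prop
  have hK : 0 ≤ (2 * Real.pi) ^ (-(n : ℝ) / 2) := by positivity
  rw [integrable_withDensity_iff_integrable_smul' (by fun_prop) (by simp)]
  have hprod : Integrable (fun x : Fin n → ℝ => ∏ i, Real.exp (-(1/4) * x i ^ 2)) volume :=
    Integrable.fintype_prod (f := fun _ t => Real.exp (-(1/4) * t ^ 2))
      fun i => integrable_exp_neg_mul_sq (by norm_num)
  refine (hprod.const_mul ((2 * Real.pi) ^ (-(n : ℝ) / 2) * Real.exp (c ^ 2))).mono'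
    (by fun_prop) (Eventually.of_forall fun x => ?_)
  rw [ENNReal.toReal_ofReal (by positivity), abs_one, one_mul, smul_eq_mul, Real.norm_eq_abs,
    abs_of_nonneg (by positivity), mul_assoc, mul_assoc, ← Real.exp_sum, ← Real.exp_add,
    ← Real.exp_add]
  refine mul_le_mul_of_nonneg_left (Real.exp_le_exp.2 ?_) hK
  have hs : 0 ≤ ∑ i, x i ^ 2 := Finset.sum_nonneg fun i _ => sq_nonneg _
  have hnorm : ‖x‖ ≤ √(∑ i, x i ^ 2) := by
    rw [pi_norm_le_iff_of_nonneg (Real.sqrt_nonneg _)]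
    intro i
    rw [Real.norm_eq_abs]
    apply Real.abs_le_sqrt
    exact Finset.single_le_sum (f := fun i => x i ^ 2) (fun i _ => sq_nonneg _) (Finset.mem_univ i)
  have hsq : ‖x‖ ^ 2 ≤ ∑ i, x i ^ 2 := by
    rw [← Real.sq_sqrt hs]; gcongr
  rw [← Finset.mul_sum]
  nlinarith [sq_nonneg (c - ‖x‖ / 2)]

instance gaussian_fin (n : ℕ) : IsFiniteMeasure (gaussianMeasure n) := by
  have := (gaussian_expInt n).integrable
  rw [integrable_const_iff] at this
  simpa using this

lemma riesz_eq_sum {n : ℕ} (u : (Fin n →₀ ℕ) → ℝ) (p : MvPolynomial (Fin n) ℝ)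
    (S : Finset (Fin n →₀ ℕ)) (hS : p.support ⊆ S) :
    riesz u p = ∑ α ∈ S, p.coeff α * u α := by
  unfold riesz
  refine Finset.sum_subset hS fun α _ hα => ?_
  rw [MvPolynomial.notMem_support_iff.1 hα, zero_mul]

noncomputable def rieszL {n : ℕ} (u : (Fin n →₀ ℕ) → ℝ) : MvPolynomial (Fin n) ℝ →ₗ[ℝ] ℝ where
  toFun p := riesz u p
  map_add' p q := by
    classical
    rw [riesz_eq_sum u p (p.support ∪ q.support) Finset.subset_union_left,
      riesz_eq_sum u q (p.support ∪ q.support) Finset.subset_union_right,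
      riesz_eq_sum u (p + q) (p.support ∪ q.support) MvPolynomial.support_add,
      ← Finset.sum_add_distrib]
    exact Finset.sum_congr rfl fun α _ => by rw [coeff_add]; ring
  map_smul' c p := by
    rw [riesz_eq_sum u (c • p) p.support MvPolynomial.support_smul, RingHom.id_apply,
      smul_eq_mul, riesz, Finset.mul_sum]
    exact Finset.sum_congr rfl fun α _ => by rw [coeff_smul, smul_eq_mul]; ring

lemma rieszL_apply {n : ℕ} (u : (Fin n →₀ ℕ) → ℝ) (p : MvPolynomial (Fin n) ℝ) :
    rieszL u p = riesz u p := rfl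

lemma riesz_monomial {n : ℕ} (u : (Fin n →₀ ℕ) → ℝ) (α : Fin n →₀ ℕ) :
    riesz u (monomial α 1) = u α := by
  rw [riesz_eq_sum u _ {α} MvPolynomial.support_monomial_subset]
  simp

lemma riesz_one {n : ℕ} (u : (Fin n →₀ ℕ) → ℝ) : riesz u 1 = u 0 := by
  have := riesz_monomial u 0
  simpa using this

lemma eval_monomial_one {n : ℕ} (x : Fin n → ℝ) (α : Fin n →₀ ℕ) :
    eval x (monomial α (1:ℝ)) = ∏ i, x i ^ α i := by
  rw [eval_monomial, one_mul, Finsupp.prod_fintype _ _ (by simp)]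

/-- moment functional of a weighted measure -/
lemma riesz_moments {n : ℕ} {ρ : Measure (Fin n → ℝ)} {w : (Fin n → ℝ) → ℝ} (hw : ExpInt ρ w)
    (p : MvPolynomial (Fin n) ℝ) :
    riesz (fun α => ∫ x, w x * ∏ i, x i ^ α i ∂ρ) p = ∫ x, w x * eval x p ∂ρ := by
  unfold riesz
  have : ∀ x : Fin n → ℝ, w x * eval x p =
      ∑ α ∈ p.support, p.coeff α * (w x * ∏ i, x i ^ α i) := by
    intro x
    rw [eval_eq', Finset.mul_sum]
    exact Finset.sum_congr rfl fun α _ => by ring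
  simp only [this]
  rw [integral_finsetSum]
  · simp only [integral_const_mul]
  · intro α _
    have h := (hw.mul_poly (monomial α 1)).integrable
    simp only [eval_monomial_one] at h
    exact h.const_mul _

lemma riesz_gmom {n : ℕ} (p : MvPolynomial (Fin n) ℝ) :
    riesz (gmom n) p = ∫ x, eval x p ∂gaussianMeasure n := by
  have := riesz_moments (gaussian_expInt n) p
  simp only [one_mul] at this
  exact this

lemma riesz_add_eq {n : ℕ} {u v : (Fin n →₀ ℕ) → ℝ} {d : ℕ}
    (h : ∀ α : Fin n →₀ ℕ, fdeg α ≤ 2 * d → u α + v α = gmom n α)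
    (p : MvPolynomial (Fin n) ℝ) (hp : p.totalDegree ≤ 2 * d) :
    riesz u p + riesz v p = ∫ x, eval x p ∂gaussianMeasure n := by
  rw [← riesz_gmom]
  unfold riesz
  rw [← Finset.sum_add_distrib]
  refine Finset.sum_congr rfl fun α hα => ?_
  rw [← h α ((le_totalDegree hα).trans hp)]
  ring

lemma totalDegree_sq_le {n d : ℕ} {p : MvPolynomial (Fin n) ℝ} (hp : p.totalDegree ≤ d) :
    (p ^ 2).totalDegree ≤ 2 * d :=
  (totalDegree_pow p 2).trans (by omega)

/-- square functional bounds -/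
lemma Feasible.sq_le {n m : ℕ} {g : Fin m → MvPolynomial (Fin n) ℝ} {d : ℕ}
    {u v : (Fin n →₀ ℕ) → ℝ} (h : Feasible g d u v) {p : MvPolynomial (Fin n) ℝ}
    (hp : p.totalDegree ≤ d) :
    riesz u (p ^ 2) ≤ ∫ x, eval x (p ^ 2) ∂gaussianMeasure n := by
  rw [← riesz_add_eq h.1 _ (totalDegree_sq_le hp)]
  linarith [h.2.2.1 p hp]

lemma Feasible.bound {n m : ℕ} {g : Fin m → MvPolynomial (Fin n) ℝ} {d : ℕ}
    {u v : (Fin n →₀ ℕ) → ℝ} (h : Feasible g d u v) {p : MvPolynomial (Fin n) ℝ}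
    (hp : p.totalDegree ≤ d) :
    |riesz u p| ≤ (∫ x, eval x 1 ∂gaussianMeasure n) +
      ∫ x, eval x (p ^ 2) ∂gaussianMeasure n := by
  have h1 := h.2.1 (1 + p) ((totalDegree_add _ _).trans (by simpa using hp))
  have h2 := h.2.1 (1 - p) ((totalDegree_sub _ _).trans (by simpa using hp))
  have h3 := h.sq_le hp
  have h4 := h.sq_le (p := 1) (by simp)
  have h5 := h.2.1 p hp
  have h6 := h.2.1 1 (by simp)
  rw [one_pow] at h4 h6
  have e1 : (1 + p) ^ 2 = 1 + (2:ℝ) • p + p ^ 2 := by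
    rw [MvPolynomial.smul_eq_C_mul]; simp only [map_ofNat]; ring
  have e2 : (1 - p) ^ 2 = 1 - (2:ℝ) • p + p ^ 2 := by
    rw [MvPolynomial.smul_eq_C_mul]; simp only [map_ofNat]; ring
  rw [e1, ← rieszL_apply, map_add, map_add, map_smul, smul_eq_mul] at h1
  rw [e2, ← rieszL_apply, map_add, map_sub, map_smul, smul_eq_mul] at h2
  simp only [rieszL_apply] at h1 h2
  rw [abs_le]
  constructor <;> linarith

lemma Feasible.mono {n m : ℕ} {g : Fin m → MvPolynomial (Fin n) ℝ} {d e : ℕ} (hde : d ≤ e)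
    {u v : (Fin n →₀ ℕ) → ℝ} (h : Feasible g e u v) : Feasible g d u v :=
  ⟨fun α hα => h.1 α (hα.trans (by omega)), fun p hp => h.2.1 p (hp.trans hde),
    fun p hp => h.2.2.1 p (hp.trans hde), fun j p hp => h.2.2.2 j p (hp.trans (by omega))⟩

lemma semialg_meas {n m : ℕ} (g : Fin m → MvPolynomial (Fin n) ℝ) :
    MeasurableSet (semialg g) := by
  have : semialg g = ⋂ j, {x | 0 ≤ eval x (g j)} := by
    ext x; simp [semialg]
  rw [this]
  exact MeasurableSet.iInter fun j =>
    (isClosed_le continuous_const (cont_eval (g j))).measurableSet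

lemma ind_expInt {n : ℕ} {S : Set (Fin n → ℝ)} (hS : MeasurableSet S) :
    ExpInt (gaussianMeasure n) (S.indicator 1) := by
  refine (gaussian_expInt n).of_le (measurable_one.indicator hS).aestronglyMeasurable
    (Eventually.of_forall fun x => ?_)
  by_cases hx : x ∈ S <;> simp [hx]

lemma ind_integral {n : ℕ} {S : Set (Fin n → ℝ)} (hS : MeasurableSet S)
    (F : (Fin n → ℝ) → ℝ) :
    ∫ x, S.indicator 1 x * F x ∂gaussianMeasure n = ∫ x in S, F x ∂gaussianMeasure n := by
  rw [← integral_indicator hS]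
  refine integral_congr_ae (Eventually.of_forall fun x => ?_)
  by_cases hx : x ∈ S <;> simp [hx]

/-- the true moments on `Ω` and its complement are feasible -/
lemma feasible_true {n m : ℕ} (g : Fin m → MvPolynomial (Fin n) ℝ) (d : ℕ) :
    ∃ u v, Feasible g d u v ∧
      ∀ p, riesz u p = ∫ x in semialg g, eval x p ∂gaussianMeasure n := by
  have hS := semialg_meas g
  have hw := ind_expInt hS
  have hw' := ind_expInt hS.compl
  refine ⟨fun α => ∫ x, (semialg g).indicator 1 x * ∏ i, x i ^ α i ∂gaussianMeasure n,
    fun α => ∫ x, (semialg g)ᶜ.indicator 1 x * ∏ i, x i ^ α i ∂gaussianMeasure n,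
    ⟨?_, ?_, ?_, ?_⟩, ?_⟩
  · intro α _
    have h1 := (hw.mul_poly (monomial α 1)).integrable
    have h2 := (hw'.mul_poly (monomial α 1)).integrable
    simp only [eval_monomial_one] at h1 h2
    rw [← integral_add h1 h2, gmom]
    refine integral_congr_ae (Eventually.of_forall fun x => ?_)
    by_cases hx : x ∈ semialg g <;> simp [hx]
  · intro p _
    rw [riesz_moments hw, ind_integral hS]
    exact integral_nonneg fun x => by rw [map_pow]; positivity
  · intro p _
    rw [riesz_moments hw', ind_integral hS.compl]
    exact integral_nonneg fun x => by rw [map_pow]; positivity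
  · intro j p _
    rw [riesz_moments hw, ind_integral hS]
    refine setIntegral_nonneg hS fun x hx => ?_
    rw [map_mul, map_pow]
    exact mul_nonneg (hx j) (sq_nonneg _)
  · intro p
    rw [riesz_moments hw, ind_integral hS]

lemma obar_bdd {n m : ℕ} (g : Fin m → MvPolynomial (Fin n) ℝ) {d : ℕ}
    {f : MvPolynomial (Fin n) ℝ} (hf : f.totalDegree ≤ d) :
    BddAbove {r | ∃ u v, Feasible g d u v ∧ r = riesz u f} := by
  refine ⟨(∫ x, eval x 1 ∂gaussianMeasure n) +
    ∫ x, eval x (f ^ 2) ∂gaussianMeasure n, ?_⟩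
  rintro r ⟨u, v, h, rfl⟩
  exact (le_abs_self _).trans (h.bound hf)

/-- limits of feasible sequences along an ultrafilter -/
lemma limit_rep {n m : ℕ} (g : Fin m → MvPolynomial (Fin n) ℝ)
    (u v : ℕ → ((Fin n →₀ ℕ) → ℝ)) (U : Ultrafilter ℕ) (hU : (U : Filter ℕ) ≤ atTop)
    (h : ∀ᶠ d in (U : Filter ℕ), Feasible g d (u d) (v d)) :
    ∃ w : (Fin n → ℝ) → ℝ, ExpInt (gaussianMeasure n) w ∧
      (∀ᵐ x ∂gaussianMeasure n, 0 ≤ w x ∧ w x ≤ 1 ∧ (x ∉ semialg g → w x = 0)) ∧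
      ∀ p, Tendsto (fun d => riesz (u d) p) U
        (𝓝 (∫ x, w x * eval x p ∂gaussianMeasure n)) := by
  have hdeg : ∀ k : ℕ, ∀ᶠ d in (U : Filter ℕ), k ≤ d := fun k => hU (eventually_ge_atTop k)
  have hlim : ∀ α, ∃ l, Tendsto (fun d => u d α) U (𝓝 l) := by
    intro α
    let B := (∫ x, eval x 1 ∂gaussianMeasure n) +
      ∫ x, eval x ((monomial α (1:ℝ)) ^ 2) ∂gaussianMeasure n
    have hb : ∀ᶠ d in (U : Filter ℕ), u d α ∈ Set.Icc (-B) B := by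
      filter_upwards [h, hdeg (monomial α (1:ℝ)).totalDegree] with d hd hd'
      have := hd.bound hd'
      rw [riesz_monomial] at this
      exact abs_le.1 this
    obtain ⟨l, _, hl⟩ := (isCompact_Icc (a := -B) (b := B)).ultrafilter_le_nhds
      (U.map fun d => u d α) (by rw [le_principal_iff]; exact hb)
    exact ⟨l, hl⟩
  choose l hl using hlim
  have hL : ∀ p, Tendsto (fun d => riesz (u d) p) U (𝓝 (rieszL l p)) := by
    intro p
    exact tendsto_finsetSum _ fun α _ => (hl α).const_mul _
  have hpos : ∀ p, 0 ≤ rieszL l (p ^ 2) := fun p => ge_of_tendsto (hL _) (by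
    filter_upwards [h, hdeg p.totalDegree] with d hd hd'
    exact hd.2.1 p hd')
  have hle : ∀ p, rieszL l (p ^ 2) ≤ ∫ x, eval x (p ^ 2) ∂gaussianMeasure n :=
    fun p => le_of_tendsto (hL _) (by
      filter_upwards [h, hdeg p.totalDegree] with d hd hd'
      exact hd.sq_le hd')
  have hg : ∀ j p, 0 ≤ rieszL l (g j * p ^ 2) := fun j p => ge_of_tendsto (hL _) (by
    filter_upwards [h, hdeg (p.totalDegree + dHalf (g j))] with d hd hd'
    exact hd.2.2.2 j p (by omega))
  have hCS : ∀ p, rieszL l p ^ 2 ≤ rieszL l 1 * rieszL l (p ^ 2) := by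
    intro p
    have hq : ∀ t : ℝ, 0 ≤ rieszL l 1 * (t * t) + (2 * rieszL l p) * t + rieszL l (p ^ 2) := by
      intro t
      have e : (C t + p) ^ 2 = (t * t) • 1 + (2 * t) • p + p ^ 2 := by
        simp only [MvPolynomial.smul_eq_C_mul, map_mul, map_ofNat]; ring
      have := hpos (C t + p)
      rw [e, map_add, map_add, map_smul, map_smul, smul_eq_mul, smul_eq_mul] at this
      linarith
    have := discrim_le_zero hq
    rw [discrim] at this
    nlinarith
  have h1nn : 0 ≤ rieszL l 1 := by simpa using hpos 1
  obtain ⟨w, hw, hwL⟩ := riesz_rep (gaussian_expInt n) (rieszL l) (√(rieszL l 1))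
    (Real.sqrt_nonneg _) (fun p => by
      rw [Real.sq_sqrt h1nn]
      refine (hCS p).trans (mul_le_mul_of_nonneg_left ?_ h1nn)
      simpa only [map_pow] using hle p)
  have hw0 : ∀ᵐ x ∂gaussianMeasure n, 0 ≤ w x := by
    apply nonneg_of_sq hw
    intro p
    have := hpos p
    rw [hwL] at this
    simpa only [map_pow] using this
  have h1w : ExpInt (gaussianMeasure n) (fun x => 1 - w x) := by
    have hm : AEStronglyMeasurable (fun x => 1 - w x) (gaussianMeasure n) :=
      aestronglyMeasurable_const.sub hw.1
    refine ⟨hm, fun c => ?_⟩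
    refine (((gaussian_expInt n).2 c).add (hw.2 c)).mono' (hm.norm.mul
      (by fun_prop : Continuous fun x : Fin n → ℝ => Real.exp (c * ‖x‖)).aestronglyMeasurable) ?_
    refine Eventually.of_forall fun x => ?_
    simp only [Pi.add_apply]
    rw [Real.norm_eq_abs, abs_mul, abs_abs, Real.abs_exp, ← add_mul]
    gcongr
    exact abs_sub _ _
  have hw1 : ∀ᵐ x ∂gaussianMeasure n, 0 ≤ 1 - w x := by
    apply nonneg_of_sq h1w
    intro p
    have := hle p
    rw [hwL] at this
    have i1 := ((gaussian_expInt n).mul_poly (p ^ 2)).integrable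
    have i2 := (hw.mul_poly (p ^ 2)).integrable
    simp only [map_pow, one_mul] at i1 i2 this
    simp only [sub_mul, one_mul]
    rw [integral_sub i1 i2]
    linarith
  have hwg : ∀ j, ∀ᵐ x ∂gaussianMeasure n, 0 ≤ w x * eval x (g j) := by
    intro j
    apply nonneg_of_sq (hw.mul_poly (g j))
    intro p
    have := hg j p
    rw [hwL] at this
    simpa only [map_pow, map_mul, mul_assoc] using this
  refine ⟨w, hw, ?_, fun p => by rw [← hwL]; exact hL p⟩
  filter_upwards [hw0, hw1, ae_all_iff.2 hwg] with x h0 h1 h2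
  refine ⟨h0, by linarith, fun hx => ?_⟩
  simp only [semialg, Set.mem_ofPred_eq, not_forall, not_le] at hx
  obtain ⟨j, hj⟩ := hx
  nlinarith [h2 j]

/-- the limit functional on `f` is dominated by the integral on `Ω`, with equality case -/
lemma limit_le {n m : ℕ} (g : Fin m → MvPolynomial (Fin n) ℝ)
    (f : MvPolynomial (Fin n) ℝ)
    (hf : ∀ᵐ x ∂(gaussianMeasure n).restrict (semialg g), 0 < eval x f)
    {w : (Fin n → ℝ) → ℝ} (hw : ExpInt (gaussianMeasure n) w)
    (h : ∀ᵐ x ∂gaussianMeasure n, 0 ≤ w x ∧ w x ≤ 1 ∧ (x ∉ semialg g → w x = 0)) :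
    (∫ x, w x * eval x f ∂gaussianMeasure n) ≤ ∫ x in semialg g, eval x f ∂gaussianMeasure n ∧
    ((∫ x, w x * eval x f ∂gaussianMeasure n) = ∫ x in semialg g, eval x f ∂gaussianMeasure n →
      ∫ x, w x * eval x 1 ∂gaussianMeasure n = (gaussianMeasure n (semialg g)).toReal) := by
  have hS := semialg_meas g
  have hf' := (ae_restrict_iff' hS).1 hf
  have i1 := (hw.mul_poly f).integrable
  have i2 := ((ind_expInt hS).mul_poly f).integrable
  rw [← ind_integral hS]
  have hmono : ∀ᵐ x ∂gaussianMeasure n,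
      w x * eval x f ≤ (semialg g).indicator 1 x * eval x f := by
    filter_upwards [h, hf'] with x ⟨h0, h1, h2⟩ h3
    by_cases hx : x ∈ semialg g
    · simp only [hx, Set.indicator_of_mem, Pi.one_apply]
      exact mul_le_mul_of_nonneg_right h1 (h3 hx).le
    · simp [hx, h2 hx]
  refine ⟨integral_mono_ae i1 i2 hmono, fun heq => ?_⟩
  have hae := (integral_eq_iff_of_ae_le i1 i2 hmono).1 heq
  have : (∫ x, w x * eval x 1 ∂gaussianMeasure n) =
      ∫ x, (semialg g).indicator 1 x * (1:ℝ) ∂gaussianMeasure n := by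
    apply integral_congr_ae
    filter_upwards [hae, h, hf'] with x hx1 ⟨h0, h1, h2⟩ h3
    by_cases hx : x ∈ semialg g
    · simp only [hx, Set.indicator_of_mem, Pi.one_apply] at hx1
      simpa [hx] using mul_right_cancel₀ (h3 hx).ne' hx1
    · simp [hx, h2 hx]
  rw [this, ind_integral hS]
  simp [Measure.real]

lemma obar_tendsto {n m : ℕ} (g : Fin m → MvPolynomial (Fin n) ℝ)
    (f : MvPolynomial (Fin n) ℝ)
    (hf : ∀ᵐ x ∂(gaussianMeasure n).restrict (semialg g), 0 < eval x f) :
    Tendsto (fun d => obar g d f) atTop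
      (𝓝 (∫ x in semialg g, eval x f ∂gaussianMeasure n)) := by
  have hex : ∀ d : ℕ, ∃ u v, Feasible g d u v ∧ obar g d f - 1 / ((d : ℝ) + 1) < riesz u f := by
    intro d
    obtain ⟨u, v, huv, _⟩ := feasible_true g d
    have hne : {r | ∃ u v, Feasible g d u v ∧ r = riesz u f}.Nonempty := ⟨_, u, v, huv, rfl⟩
    obtain ⟨r, ⟨u', v', h', rfl⟩, hr⟩ := exists_lt_of_lt_csSup hne
      (show obar g d f - 1 / ((d : ℝ) + 1) < _ from
        sub_lt_self _ (by positivity))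
    exact ⟨u', v', h', hr⟩
  choose u v huv hlt using hex
  rw [tendsto_iff_ultrafilter]
  intro U hU
  obtain ⟨w, hw, hwae, hlim⟩ := limit_rep g u v U hU (Eventually.of_forall huv)
  have hle := (limit_le g f hf hw hwae).1
  have hlow : ∀ᶠ d in (U : Filter ℕ),
      (∫ x in semialg g, eval x f ∂gaussianMeasure n) ≤ obar g d f := by
    filter_upwards [hU (eventually_ge_atTop f.totalDegree)] with d hd
    obtain ⟨u, v, huv, hr⟩ := feasible_true g d
    exact le_csSup (obar_bdd g hd) ⟨u, v, huv, (hr f).symm⟩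
  have hup : ∀ d, obar g d f ≤ riesz (u d) f + 1 / ((d : ℝ) + 1) := fun d => by
    linarith [hlt d]
  have hlim2 : Tendsto (fun d : ℕ => riesz (u d) f + 1 / ((d : ℝ) + 1)) U
      (𝓝 (∫ x, w x * eval x f ∂gaussianMeasure n)) := by
    simpa using (hlim f).add (tendsto_one_div_add_atTop_nhds_zero_nat.mono_left hU)
  have hge : (∫ x in semialg g, eval x f ∂gaussianMeasure n) ≤
      ∫ x, w x * eval x f ∂gaussianMeasure n :=
    ge_of_tendsto hlim2 (by filter_upwards [hlow] with d hd using hd.trans (hup d))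
  rw [le_antisymm hle hge] at hlim2
  exact tendsto_of_tendsto_of_tendsto_of_le_of_le' tendsto_const_nhds hlim2 hlow
    (Eventually.of_forall hup)

/-- for the Gaussian measure, `Ω = {x : g_j(x) ≥ 0}` with `Ω` and `ℝⁿ∖Ω` of
nonempty interior, and `f` strictly positive a.e. on `Ω`: `ō_d(f) → ∫_Ω f dμ`; any choice of
optimal solutions `(u^d, v^d)` (for `d ≥ d₀`) satisfies `u^d_0 → μ(Ω)`; and for `f = 1` the
sequence `(ō_d(1))` is monotone non-increasing and converges to `μ(Ω)`. -/
theorem stmt9 {n m : ℕ} (g : Fin m → MvPolynomial (Fin n) ℝ)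
    (hΩ : (interior (semialg g)).Nonempty)
    (hΩc : (interior ((semialg g)ᶜ)).Nonempty)
    (f : MvPolynomial (Fin n) ℝ)
    (hf : ∀ᵐ x ∂(gaussianMeasure n).restrict (semialg g), 0 < eval x f)
    (d0 : ℕ) (hd0 : ∀ j, dHalf (g j) ≤ d0) :
    Tendsto (fun d => obar g d f) atTop
      (𝓝 (∫ x in semialg g, eval x f ∂gaussianMeasure n)) ∧
    (∀ u v : ℕ → ((Fin n →₀ ℕ) → ℝ),
      (∀ d, d0 ≤ d → Feasible g d (u d) (v d) ∧ riesz (u d) f = obar g d f) →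
      Tendsto (fun d => u d 0) atTop (𝓝 (gaussianMeasure n (semialg g)).toReal)) ∧
    (∀ d, d0 ≤ d → obar g (d + 1) 1 ≤ obar g d 1) ∧
    Tendsto (fun d => obar g d 1) atTop (𝓝 (gaussianMeasure n (semialg g)).toReal) := by
  have hone : (∫ x in semialg g, eval x (1 : MvPolynomial (Fin n) ℝ) ∂gaussianMeasure n) =
      (gaussianMeasure n (semialg g)).toReal := by
    simp [Measure.real]
  refine ⟨obar_tendsto g f hf, ?_, ?_, ?_⟩
  · intro u v huv
    rw [tendsto_iff_ultrafilter]
    intro U hU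
    have hev : ∀ᶠ d in (U : Filter ℕ), d0 ≤ d := hU (eventually_ge_atTop d0)
    obtain ⟨w, hw, hwae, hlim⟩ := limit_rep g u v U hU
      (by filter_upwards [hev] with d hd using (huv d hd).1)
    have h1 : Tendsto (fun d => riesz (u d) f) U
        (𝓝 (∫ x in semialg g, eval x f ∂gaussianMeasure n)) := by
      refine ((obar_tendsto g f hf).mono_left hU).congr' ?_
      filter_upwards [hev] with d hd using (huv d hd).2.symm
    have h2 := (limit_le g f hf hw hwae).2 (tendsto_nhds_unique (hlim f) h1)
    have h3 := hlim 1
    rw [h2] at h3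
    simpa only [riesz_one] using h3
  · intro d _
    obtain ⟨u, v, huv, _⟩ := feasible_true g (d + 1)
    refine csSup_le_csSup (obar_bdd g (by simp)) ⟨_, u, v, huv, rfl⟩ ?_
    rintro r ⟨u, v, h, rfl⟩
    exact ⟨u, v, h.mono (Nat.le_succ d), rfl⟩
  · rw [← hone]
    exact obar_tendsto g 1 (Eventually.of_forall fun x => by simp)
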